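/- arXiv:2512.07271 — 2 statements merged into one kernel-verified Lean document; each statement's English description precedes it below -/
import Mathlib

section
/- Let n ≥ 1, let z = x + iy ∈ ℂⁿ with x, y ∈ ℝⁿ, and let ζ = a + ib ∈ ℂ with a, b ∈ ℝ satisfy ζ² = z₁² + z₂² + ... + zₙ². Then |b| ≤ ‖y‖, where ‖·‖ denotes the Euclidean norm on ℝⁿ. -/
/-!
The real and imaginary parts of the hypothesis say `a² - b² = ‖x‖² - ‖y‖²` and `a b = ⟪x, y⟫`.
If `b² > ‖y‖²`, the first identity gives `a² > ‖x‖²`, hence `(a b)² > ‖x‖² ‖y‖²`, which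
contradicts Cauchy–Schwarz applied to the second identity.
-/

/-- If `ζ = a + ib ∈ ℂ` satisfies `ζ² = z₁² + ⋯ + zₙ²` where
`z = x + iy ∈ ℂⁿ` with `x, y ∈ ℝⁿ`, then `|b| ≤ ‖y‖`. -/
theorem abs_im_le_norm_of_sq_eq_sum_sq (n : ℕ) (hn : 1 ≤ n)
    (x y : EuclideanSpace ℝ (Fin n)) (a b : ℝ)
    (h : ((a : ℂ) + (b : ℂ) * Complex.I) ^ 2 =
      ∑ i : Fin n, ((x i : ℂ) + (y i : ℂ) * Complex.I) ^ 2) :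
    |b| ≤ ‖y‖ := by
  have hre : a ^ 2 - b ^ 2 = ‖x‖ ^ 2 - ‖y‖ ^ 2 := by
    have h1 := congrArg Complex.re h
    simp only [Complex.re_sum, pow_two, Complex.mul_re, Complex.mul_im, Complex.add_re,
      Complex.add_im, Complex.ofReal_re, Complex.ofReal_im, Complex.I_re, Complex.I_im] at h1
    rw [EuclideanSpace.real_norm_sq_eq, EuclideanSpace.real_norm_sq_eq,
      ← Finset.sum_sub_distrib]
    calc a ^ 2 - b ^ 2 = _ := by ring
      _ = _ := h1
      _ = _ := Finset.sum_congr rfl fun i _ => by ring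
  have him : a * b = inner ℝ x y := by
    have h1 := congrArg Complex.im h
    simp only [Complex.im_sum, pow_two, Complex.mul_re, Complex.mul_im, Complex.add_re,
      Complex.add_im, Complex.ofReal_re, Complex.ofReal_im, Complex.I_re, Complex.I_im] at h1
    have h2 : 2 * (a * b) = 2 * inner ℝ x y := by
      rw [PiLp.inner_apply, Finset.mul_sum]
      calc 2 * (a * b) = _ := by ring
        _ = _ := h1
        _ = _ := Finset.sum_congr rfl fun i _ => by
          simp only [RCLike.inner_apply, conj_trivial]
          ring
    linarith
  have hcs : (a * b) ^ 2 ≤ ‖x‖ ^ 2 * ‖y‖ ^ 2 := by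
    rw [him, ← mul_pow, ← sq_abs]
    exact pow_le_pow_left₀ (abs_nonneg _) (abs_real_inner_le_norm x y) 2
  refine abs_le_of_sq_le_sq (le_of_not_gt fun hlt => ?_) (norm_nonneg y)
  have ha : ‖x‖ ^ 2 < a ^ 2 := by linarith
  have hlt' : ‖x‖ ^ 2 * ‖y‖ ^ 2 < a ^ 2 * b ^ 2 :=
    mul_lt_mul'' ha hlt (sq_nonneg _) (sq_nonneg _)
  rw [mul_pow] at hcs
  exact absurd hcs (not_le.mpr hlt')
end

section
/- Let f₀ : ℂ → ℂ be an even entire function with power series expansion f₀(ζ) = Σ_{m=0}^∞ aₘ ζ^{2m} for ζ ∈ ℂ, and suppose there exist constants A ≥ 0 and σ ≥ 0 such that |f₀(a + ib)| ≤ A e^{σ|b|} for all a, b ∈ ℝ. Then the entire function f : ℂⁿ → ℂ defined by f(z) = Σ_{m=0}^∞ aₘ (z₁² + ... + zₙ²)^m satisfies |f(x + iy)| ≤ A e^{σ‖y‖} for all x, y ∈ ℝⁿ. -/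
/-!
Given `z = x + iy`, let `ζ = s + it` be a square root of `w = ∑ zᵢ²`. Comparing the two series gives
`f z = f₀ ζ`, so the bound on `f₀` reduces the estimate to `|t| ≤ ‖y‖`. Real and imaginary parts of
`ζ² = w` read `s² - t² = ‖x‖² - ‖y‖²` and `s t = ⟨x, y⟩`. If `t² > ‖y‖²`, then also `s² > ‖x‖²`, so
`s² t² > ‖x‖² ‖y‖²`, contradicting Cauchy–Schwarz. Differentiability holds because
`f z = g (∑ zᵢ²)` with `g w = ∑ aₘ wᵐ` an everywhere convergent, hence entire, power series.
-/

theorem differentiable_tsum_pow (a : ℕ → ℂ) (h : ∀ w : ℂ, Summable fun m => a m * w ^ m) :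
    Differentiable ℂ fun w : ℂ => ∑' m, a m * w ^ m := by
  intro w
  obtain ⟨R, hR⟩ := exists_gt ‖w‖
  have hR0 : 0 ≤ R := (norm_nonneg w).trans hR.le
  -- In finite dimension convergence at `R` is absolute, which gives the Weierstrass majorant.
  have hd := Complex.differentiableOn_tsum_of_summable_norm (U := Metric.ball (0 : ℂ) R)
    (F := fun m w => a m * w ^ m) (h (R : ℂ)).norm
    (fun m => by fun_prop) Metric.isOpen_ball (fun m v hv => by
      have hv' : ‖v‖ ≤ R := (mem_ball_zero_iff.mp hv).le
      simp only [norm_mul, norm_pow, Complex.norm_real, Real.norm_of_nonneg hR0]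
      gcongr)
  exact hd.differentiableAt (Metric.isOpen_ball.mem_nhds (mem_ball_zero_iff.mpr hR))

/-- The imaginary part of a square root of `∑ (xᵢ + i yᵢ)²` is at most `‖y‖` in absolute value. -/
theorem abs_im_sqrt_le {n : ℕ} (x y : EuclideanSpace ℝ (Fin n)) (ζ : ℂ)
    (hζ : ζ ^ 2 = ∑ i : Fin n, ((x i : ℂ) + (y i : ℂ) * Complex.I) ^ 2) : |ζ.im| ≤ ‖y‖ := by
  have hre := congrArg Complex.re hζ
  have him := congrArg Complex.im hζ
  simp only [pow_two, Complex.mul_re, Complex.mul_im, Complex.re_sum, Complex.im_sum,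
    Complex.add_re, Complex.add_im, Complex.ofReal_re, Complex.ofReal_im, Complex.I_re,
    Complex.I_im, mul_zero, mul_one, add_zero, zero_add, sub_self] at hre him
  have hx := EuclideanSpace.real_norm_sq_eq x
  have hy := EuclideanSpace.real_norm_sq_eq y
  have hre' : ζ.re ^ 2 - ζ.im ^ 2 = ‖x‖ ^ 2 - ‖y‖ ^ 2 := by
    rw [hx, hy, ← Finset.sum_sub_distrib]
    simpa only [pow_two] using hre
  have him' : ζ.re * ζ.im = ∑ i, x i * y i := by
    have h2 : ∑ i, (x i * y i + y i * x i) = 2 * ∑ i, x i * y i := by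
      rw [Finset.mul_sum]
      exact Finset.sum_congr rfl fun i _ => by ring
    linarith
  have hcs := Finset.sum_mul_sq_le_sq_mul_sq Finset.univ (fun i => x i) (fun i => y i)
  rw [← him', ← hx, ← hy] at hcs
  refine abs_le_of_sq_le_sq ?_ (norm_nonneg y)
  by_contra! hlt
  have hs : ‖x‖ ^ 2 < ζ.re ^ 2 := by linarith
  have := mul_lt_mul'' hs hlt (sq_nonneg _) (sq_nonneg _)
  linarith [mul_pow ζ.re ζ.im 2]


/-- lifting lemma. If `f₀ : ℂ → ℂ` is an even entire function with power
series expansion `f₀(ζ) = Σ aₘ ζ^{2m}` satisfying `|f₀(a+ib)| ≤ A e^{σ|b|}`, then the entire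
function `f : ℂⁿ → ℂ` given by `f(z) = Σ aₘ (z₁² + ⋯ + zₙ²)^m` satisfies
`|f(x+iy)| ≤ A e^{σ‖y‖}` for all `x, y ∈ ℝⁿ`. -/
theorem lifting_lemma (n : ℕ) (f₀ : ℂ → ℂ) (a : ℕ → ℂ) (A σ : ℝ)
    (hA : 0 ≤ A) (hσ : 0 ≤ σ)
    (hf₀_entire : Differentiable ℂ f₀)
    (hf₀_even : ∀ ζ : ℂ, f₀ (-ζ) = f₀ ζ)
    (hf₀_series : ∀ ζ : ℂ, HasSum (fun m : ℕ => a m * ζ ^ (2 * m)) (f₀ ζ))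
    (hf₀_bound : ∀ s t : ℝ, ‖f₀ ((s : ℂ) + (t : ℂ) * Complex.I)‖ ≤ A * Real.exp (σ * |t|))
    (f : (Fin n → ℂ) → ℂ)
    (hf : ∀ z : Fin n → ℂ, HasSum (fun m : ℕ => a m * (∑ i : Fin n, z i ^ 2) ^ m) (f z)) :
    Differentiable ℂ f ∧
      ∀ x y : EuclideanSpace ℝ (Fin n),
        ‖f (fun i => (x i : ℂ) + (y i : ℂ) * Complex.I)‖ ≤ A * Real.exp (σ * ‖y‖) := by
  have hsq (w : ℂ) : ∃ ζ : ℂ, ζ ^ 2 = w := IsAlgClosed.exists_pow_nat_eq w two_pos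
  refine ⟨?_, fun x y => ?_⟩
  · have hg := differentiable_tsum_pow a fun w => by
      obtain ⟨ζ, rfl⟩ := hsq w
      simpa only [← pow_mul] using (hf₀_series ζ).summable
    have hfg : f = (fun w : ℂ => ∑' m, a m * w ^ m) ∘ fun z : Fin n → ℂ => ∑ i, z i ^ 2 :=
      funext fun z => (hf z).tsum_eq.symm
    rw [hfg]
    exact hg.comp (by fun_prop)
  · obtain ⟨ζ, hζ⟩ := hsq (∑ i : Fin n, ((x i : ℂ) + (y i : ℂ) * Complex.I) ^ 2)
    have hfζ : f (fun i => (x i : ℂ) + (y i : ℂ) * Complex.I) = f₀ ζ := by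
      refine (hf _).unique ?_
      simpa only [← hζ, ← pow_mul] using hf₀_series ζ
    have hb := hf₀_bound ζ.re ζ.im
    rw [Complex.re_add_im] at hb
    rw [hfζ]
    refine hb.trans ?_
    gcongr
    exact abs_im_sqrt_le x y ζ hζ
end
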